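/- Let α ≥ 1 and let ψ be the monotone rearrangement sending ν_1 to ν_α, so that ψ^{-1}(x) = − sgn(x) · log( Z_α^{-1} ∫_{|x|}^{+∞} e^{-u^α} du ) for x ∈ ℝ, where Z_α = ∫_0^∞ e^{-u^α} du normalizes μ_α. Then there is a constant γ > 0 depending only on α such that for every m ≥ 1, every ε ∈ (0,1), and all x, y ∈ ℝ with |x| ≤ m and |x − y| ≥ m/ε, one has | ψ^{-1}(x) − ψ^{-1}(y) | ≥ (1 − γ ε) |x − y|^α. -/

import Mathlib

/-!
On `[0, ∞)` the function `ψ⁻¹` is superadditive: since `e^{-u^α}` is log-concave, its tail integral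
`T` satisfies `T 0 * T (s + t) ≤ T s * T t`. The same log-concavity gives `T t ≤ e^{-t^α} T 0`,
that is `t^α ≤ ψ⁻¹ t`. As `ψ⁻¹` is odd, these two facts yield
`||x| - |y||^α ≤ |ψ⁻¹ x - ψ⁻¹ y|`, and `||x| - |y|| ≥ (1 - 2ε) |x - y|` as soon as
`|x| ≤ ε |x - y|`. Bernoulli's inequality then gives the theorem with `γ = 2α`.
-/

open MeasureTheory Filter Topology

noncomputable section

/-- The normalizing constant `Z_α = ∫_0^∞ e^{-u^α} du`. -/
def Zalpha (α : ℝ) : ℝ := ∫ u in Set.Ioi (0 : ℝ), Real.exp (-u ^ α)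

/-- The inverse `ψ⁻¹` of the monotone rearrangement sending `ν_1` to `ν_α`:
`ψ⁻¹(x) = - sgn(x) log ( Z_α⁻¹ ∫_{|x|}^∞ e^{-u^α} du )`. -/
def psiInv (α : ℝ) (x : ℝ) : ℝ :=
  -Real.sign x * Real.log ((Zalpha α)⁻¹ * ∫ u in Set.Ioi |x|, Real.exp (-u ^ α))

section TailIntegral

variable {E : Type*} [NormedAddCommGroup E]

theorem integrableOn_Ioi_comp_add_right {f : ℝ → E} {b s : ℝ}
    (hf : IntegrableOn f (Set.Ioi (b + s))) :
    IntegrableOn (fun v => f (v + s)) (Set.Ioi b) := by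
  have h := (measurePreserving_add_right volume s).integrableOn_comp_preimage
    (measurableEmbedding_addRight s) |>.2 hf
  simpa [Function.comp_def] using h

theorem integral_Ioi_comp_add_right [NormedSpace ℝ E] (f : ℝ → E) (b s : ℝ) :
    ∫ v in Set.Ioi b, f (v + s) = ∫ v in Set.Ioi (b + s), f v := by
  have h := (measurePreserving_add_right volume s).setIntegral_preimage_emb
    (measurableEmbedding_addRight s) f (Set.Ioi (b + s))
  simpa using h

variable {f : ℝ → ℝ} {a b s : ℝ}

theorem mul_integral_Ioi_add_le_mul_integral_Ioi {c d : ℝ} (hs : 0 ≤ s)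
    (hf : IntegrableOn f (Set.Ioi b)) (h : ∀ v ∈ Set.Ioi b, c * f (v + s) ≤ d * f v) :
    c * ∫ v in Set.Ioi (b + s), f v ≤ d * ∫ v in Set.Ioi b, f v := by
  have hfs : IntegrableOn f (Set.Ioi (b + s)) :=
    hf.mono_set (Set.Ioi_subset_Ioi (le_add_of_nonneg_right hs))
  rw [← integral_Ioi_comp_add_right, ← integral_const_mul, ← integral_const_mul]
  exact setIntegral_mono_on ((integrableOn_Ioi_comp_add_right hfs).const_mul c) (hf.const_mul d)
    measurableSet_Ioi h

theorem integral_Ioi_mul_integral_Ioi_add_le (hab : a ≤ b) (hs : 0 ≤ s)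
    (hf : IntegrableOn f (Set.Ioi a))
    (h : ∀ u ∈ Set.Icc a b, ∀ v ∈ Set.Ioi b, f u * f (v + s) ≤ f (u + s) * f v) :
    (∫ v in Set.Ioi a, f v) * ∫ v in Set.Ioi (b + s), f v ≤
      (∫ v in Set.Ioi (a + s), f v) * ∫ v in Set.Ioi b, f v := by
  have hfb : IntegrableOn f (Set.Ioi b) := hf.mono_set (Set.Ioi_subset_Ioi hab)
  have hfs : IntegrableOn f (Set.Ioi (a + s)) :=
    hf.mono_set (Set.Ioi_subset_Ioi (le_add_of_nonneg_right hs))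
  have hint : IntervalIntegrable f volume a b :=
    (intervalIntegrable_iff_integrableOn_Ioc_of_le hab).2 (hf.mono_set Set.Ioc_subset_Ioi_self)
  have hint_add : IntervalIntegrable (fun u => f (u + s)) volume a b :=
    (intervalIntegrable_iff_integrableOn_Ioc_of_le hab).2
      ((integrableOn_Ioi_comp_add_right hfs).mono_set Set.Ioc_subset_Ioi_self)
  -- The claim is this inequality with `(∫ Ioi b) * (∫ Ioi (b + s))` added to both sides.
  have hinterval : (∫ u in a..b, f u) * ∫ v in Set.Ioi (b + s), f v ≤
      (∫ u in a..b, f (u + s)) * ∫ v in Set.Ioi b, f v := by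
    simp only [← intervalIntegral.integral_mul_const]
    exact intervalIntegral.integral_mono_on hab (hint.mul_const _) (hint_add.mul_const _)
      fun u hu => mul_integral_Ioi_add_le_mul_integral_Ioi hs hfb (h u hu)
  rw [intervalIntegral.integral_comp_add_right,
    ← intervalIntegral.integral_Ioi_sub_Ioi hf hab,
    ← intervalIntegral.integral_Ioi_sub_Ioi hfs (add_le_add_left hab s)] at hinterval
  linarith

end TailIntegral

theorem map_add_add_map_le_of_convexOn {𝕜 : Type*} [Field 𝕜] [LinearOrder 𝕜] [IsStrictOrderedRing 𝕜]
    {S : Set 𝕜} {V : 𝕜 → 𝕜} {u v s : 𝕜} (hV : ConvexOn 𝕜 S V) (hu : u ∈ S) (hvs : v + s ∈ S)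
    (huv : u ≤ v) (hs : 0 ≤ s) :
    V (u + s) + V v ≤ V u + V (v + s) := by
  rcases hs.eq_or_lt with rfl | hs
  · simp
  have hlen : 0 < v + s - u := by linarith
  set p := s / (v + s - u)
  have hp0 : 0 ≤ p := by positivity
  have hp1 : 0 ≤ 1 - p := sub_nonneg.2 ((div_le_one hlen).2 (by linarith))
  have hpmul : p * (v + s - u) = s := div_mul_cancel₀ s hlen.ne'
  have hleft : V (u + s) ≤ (1 - p) * V u + p * V (v + s) := by
    have h := hV.2 hu hvs hp1 hp0 (sub_add_cancel 1 p)
    rwa [show (1 - p) • u + p • (v + s) = u + s by simp only [smul_eq_mul]; linarith] at h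
  have hright : V v ≤ p * V u + (1 - p) * V (v + s) := by
    have h := hV.2 hu hvs hp0 hp1 (add_sub_cancel p 1)
    rwa [show p • u + (1 - p) • (v + s) = v by simp only [smul_eq_mul]; linarith] at h
  linarith

theorem exp_neg_rpow_mul_exp_neg_add_rpow_le {α u v s : ℝ} (hα : 1 ≤ α) (hu : 0 ≤ u)
    (huv : u ≤ v) (hs : 0 ≤ s) :
    Real.exp (-u ^ α) * Real.exp (-(v + s) ^ α) ≤ Real.exp (-(u + s) ^ α) * Real.exp (-v ^ α) := by
  rw [← Real.exp_add, ← Real.exp_add, Real.exp_le_exp]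
  have h := map_add_add_map_le_of_convexOn (convexOn_rpow hα) hu
    (add_nonneg (hu.trans huv) hs) huv hs
  linarith

theorem integrableOn_Ioi_exp_neg_rpow {α t : ℝ} (hα : 0 < α) (ht : 0 ≤ t) :
    IntegrableOn (fun u : ℝ => Real.exp (-u ^ α)) (Set.Ioi t) := by
  have h := integrableOn_rpow_mul_exp_neg_rpow (p := α) (s := 0) (by norm_num) hα
  simp only [Real.rpow_zero, one_mul] at h
  exact h.mono_set (Set.Ioi_subset_Ioi ht)

theorem integral_Ioi_exp_neg_rpow_pos {α t : ℝ} (hα : 0 < α) (ht : 0 ≤ t) :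
    0 < ∫ u in Set.Ioi t, Real.exp (-u ^ α) := by
  have : NeZero (volume (Set.Ioi t)) := ⟨by simp⟩
  exact integral_exp_pos (integrableOn_Ioi_exp_neg_rpow hα ht)

theorem Zalpha_pos {α : ℝ} (hα : 0 < α) : 0 < Zalpha α :=
  integral_Ioi_exp_neg_rpow_pos hα le_rfl

theorem integral_Ioi_exp_neg_rpow_le {α t : ℝ} (hα : 1 ≤ α) (ht : 0 ≤ t) :
    ∫ u in Set.Ioi t, Real.exp (-u ^ α) ≤ Real.exp (-t ^ α) * Zalpha α := by
  have hα0 : 0 < α := by linarith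
  have h := mul_integral_Ioi_add_le_mul_integral_Ioi ht (integrableOn_Ioi_exp_neg_rpow hα0 le_rfl)
    fun v hv => exp_neg_rpow_mul_exp_neg_add_rpow_le hα le_rfl (le_of_lt hv) ht
  simpa [Real.zero_rpow hα0.ne', Zalpha] using h

theorem Zalpha_mul_integral_Ioi_add_le {α s t : ℝ} (hα : 1 ≤ α) (hs : 0 ≤ s) (ht : 0 ≤ t) :
    Zalpha α * ∫ u in Set.Ioi (s + t), Real.exp (-u ^ α) ≤
      (∫ u in Set.Ioi s, Real.exp (-u ^ α)) * ∫ u in Set.Ioi t, Real.exp (-u ^ α) := by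
  have h := integral_Ioi_mul_integral_Ioi_add_le hs ht
    (integrableOn_Ioi_exp_neg_rpow (by linarith) le_rfl)
    fun u hu v hv => exp_neg_rpow_mul_exp_neg_add_rpow_le hα hu.1 (hu.2.trans (le_of_lt hv)) ht
  rwa [zero_add, mul_comm (∫ u in Set.Ioi t, _)] at h

theorem psiInv_of_nonneg {α t : ℝ} (hα : 0 < α) (ht : 0 ≤ t) :
    psiInv α t = -Real.log ((Zalpha α)⁻¹ * ∫ u in Set.Ioi t, Real.exp (-u ^ α)) := by
  rcases ht.eq_or_lt with rfl | ht
  · have hZ : (Zalpha α)⁻¹ * ∫ u in Set.Ioi (0 : ℝ), Real.exp (-u ^ α) = 1 :=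
      inv_mul_cancel₀ (Zalpha_pos hα).ne'
    simp [psiInv, hZ]
  · rw [psiInv, Real.sign_of_pos ht, abs_of_pos ht, neg_one_mul]

theorem psiInv_neg (α x : ℝ) : psiInv α (-x) = -psiInv α x := by
  rw [psiInv, psiInv, Real.sign_neg, abs_neg]
  ring

theorem rpow_le_psiInv {α t : ℝ} (hα : 1 ≤ α) (ht : 0 ≤ t) : t ^ α ≤ psiInv α t := by
  have hα0 : 0 < α := by linarith
  have hZ := Zalpha_pos hα0
  have hpos := mul_pos (inv_pos.2 hZ) (integral_Ioi_exp_neg_rpow_pos hα0 ht)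
  rw [psiInv_of_nonneg hα0 ht, le_neg, Real.log_le_iff_le_exp hpos, inv_mul_le_iff₀ hZ, mul_comm]
  exact integral_Ioi_exp_neg_rpow_le hα ht

theorem psiInv_add_psiInv_le {α s t : ℝ} (hα : 1 ≤ α) (hs : 0 ≤ s) (ht : 0 ≤ t) :
    psiInv α s + psiInv α t ≤ psiInv α (s + t) := by
  have hα0 : 0 < α := by linarith
  have hZ := Zalpha_pos hα0
  have hTs := integral_Ioi_exp_neg_rpow_pos hα0 hs
  have hTt := integral_Ioi_exp_neg_rpow_pos hα0 ht
  have hTst := integral_Ioi_exp_neg_rpow_pos hα0 (add_nonneg hs ht)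
  have hlog := Real.log_le_log (mul_pos hZ hTst) (Zalpha_mul_integral_Ioi_add_le hα hs ht)
  rw [Real.log_mul hZ.ne' hTst.ne', Real.log_mul hTs.ne' hTt.ne'] at hlog
  rw [psiInv_of_nonneg hα0 hs, psiInv_of_nonneg hα0 ht, psiInv_of_nonneg hα0 (add_nonneg hs ht),
    Real.log_mul (inv_pos.2 hZ).ne' hTs.ne', Real.log_mul (inv_pos.2 hZ).ne' hTt.ne',
    Real.log_mul (inv_pos.2 hZ).ne' hTst.ne', Real.log_inv]
  linarith

theorem abs_psiInv {α : ℝ} (hα : 1 ≤ α) (x : ℝ) : |psiInv α x| = psiInv α |x| := by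
  have hnonneg : 0 ≤ psiInv α |x| :=
    (Real.rpow_nonneg (abs_nonneg x) α).trans (rpow_le_psiInv hα (abs_nonneg x))
  rw [← abs_of_nonneg hnonneg]
  rcases abs_choice x with h | h <;> simp only [h, psiInv_neg, abs_neg]

theorem abs_abs_sub_abs_rpow_le {α : ℝ} (hα : 1 ≤ α) (x y : ℝ) :
    |(|x| - |y|)| ^ α ≤ |psiInv α x - psiInv α y| := by
  wlog hxy : |x| ≤ |y| generalizing x y
  · rw [abs_sub_comm, abs_sub_comm (psiInv α x)]
    exact this y x (le_of_not_ge hxy)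
  have hsub : 0 ≤ |y| - |x| := sub_nonneg.2 hxy
  calc |(|x| - |y|)| ^ α = (|y| - |x|) ^ α := by rw [abs_sub_comm, abs_of_nonneg hsub]
    _ ≤ psiInv α (|y| - |x|) := rpow_le_psiInv hα hsub
    _ ≤ psiInv α |y| - psiInv α |x| := by
        have h := psiInv_add_psiInv_le hα hsub (abs_nonneg x)
        rw [sub_add_cancel] at h
        linarith
    _ = |psiInv α y| - |psiInv α x| := by rw [abs_psiInv hα, abs_psiInv hα]
    _ ≤ |psiInv α x - psiInv α y| := by
        rw [abs_sub_comm]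
        exact abs_sub_abs_le_abs_sub _ _

theorem one_sub_mul_rpow_le {α δ D : ℝ} (hα : 1 ≤ α) (hδ : δ ≤ 1) (hD : 0 ≤ D) :
    (1 - α * δ) * D ^ α ≤ ((1 - δ) * D) ^ α := by
  rw [Real.mul_rpow (by linarith) hD]
  have h := one_add_mul_self_le_rpow_one_add (s := -δ) (by linarith) hα
  rw [mul_neg, ← sub_eq_add_neg, ← sub_eq_add_neg] at h
  exact mul_le_mul_of_nonneg_right h (Real.rpow_nonneg hD α)

theorem rearrangement_large_increments_general {α ε x y : ℝ} (hα : 1 ≤ α)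
    (hx : |x| ≤ ε * |x - y|) :
    (1 - 2 * α * ε) * |x - y| ^ α ≤ |psiInv α x - psiInv α y| := by
  rcases le_total (2 * ε) 1 with hε | hε
  · have habs : (1 - 2 * ε) * |x - y| ≤ |(|x| - |y|)| := by
      have h₁ : |x - y| ≤ |x| + |y| := abs_sub x y
      have h₂ : |y| - |x| ≤ |(|x| - |y|)| := by
        rw [abs_sub_comm]
        exact le_abs_self _
      linarith
    calc (1 - 2 * α * ε) * |x - y| ^ α = (1 - α * (2 * ε)) * |x - y| ^ α := by ring
      _ ≤ ((1 - 2 * ε) * |x - y|) ^ α := one_sub_mul_rpow_le hα hε (abs_nonneg _)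
      _ ≤ |(|x| - |y|)| ^ α :=
          Real.rpow_le_rpow (mul_nonneg (by linarith) (abs_nonneg _)) habs (by linarith)
      _ ≤ |psiInv α x - psiInv α y| := abs_abs_sub_abs_rpow_le hα x y
  · have hcoeff : 1 - 2 * α * ε ≤ 0 := by nlinarith
    exact (mul_nonpos_of_nonpos_of_nonneg hcoeff (Real.rpow_nonneg (abs_nonneg _) α)).trans
      (abs_nonneg _)

/-- Lemma (sharp lower estimate on the large increments of the monotone
rearrangement, `α ≥ 1`). -/
theorem rearrangement_large_increments (α : ℝ) (hα : 1 ≤ α) :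
    ∃ γ > (0 : ℝ), ∀ m : ℝ, 1 ≤ m → ∀ ε : ℝ, 0 < ε → ε < 1 →
      ∀ x y : ℝ, |x| ≤ m → m / ε ≤ |x - y| →
        (1 - γ * ε) * |x - y| ^ α ≤ |psiInv α x - psiInv α y| :=
  ⟨2 * α, by positivity, fun _ _ _ hε _ _ _ hx hxy =>
    rearrangement_large_increments_general hα (hx.trans ((div_le_iff₀' hε).1 hxy))⟩

end
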